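/- Let C be a category with binary coproducts, F : C ⥤ C an endofunctor, and K an object of C. Define X : ℕ → C by X 0 = K and X (n+1) = K ⨿ F.obj (X n), and morphisms i n : X n ⟶ X (n+1) by i 0 = coprod.inl and i (n+1) = coprod.map (𝟙 K) (F.map (i n)); let D : ℕ ⥤ C be the resulting chain. Suppose D admits a colimit cocone with point K* and coprojections ι n : X n ⟶ K*, and let u : K* ⟶ K ⨿ F.obj K* be the unique morphism satisfying ι 0 ≫ u = coprod.inl and ι (n+1) ≫ u = coprod.map (𝟙 K) (F.map (ι n)) for all n. If u is an isomorphism, then setting a := coprod.inr ≫ inv u : F.obj K* ⟶ K*, the F-algebra (K*, a) together with j := ι 0 : K ⟶ K* is a free F-algebra on K: for every F-algebra (A, α) and every morphism g : K ⟶ A in C there exists a unique F-algebra homomorphism h : (K*, a) ⟶ (A, α) such that j ≫ h.f = g. -/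

import Mathlib

open CategoryTheory CategoryTheory.Limits

universe v u

namespace Adamek2

variable {C : Type u} [Category.{v} C] [HasBinaryCoproducts C] (F : C ⥤ C) (K : C)

/-- The objects of the free chain: `X 0 = K`, `X (n+1) = K ⨿ F (X n)`. -/
noncomputable def X : ℕ → C
  | 0 => K
  | n + 1 => K ⨿ F.obj (X n)

/-- The connecting morphisms of the free chain. -/
noncomputable def i : ∀ n : ℕ, X F K n ⟶ X F K (n + 1)
  | 0 => coprod.inl
  | n + 1 => coprod.map (𝟙 K) (F.map (i n))

/-- The free chain `K ⟶ K ⨿ F K ⟶ K ⨿ F (K ⨿ F K) ⟶ ⋯` as a functor `ℕ ⥤ C`. -/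
noncomputable def D : ℕ ⥤ C := Functor.ofSequence (i F K)

end Adamek2

namespace Adamek2

/-- The maps from the free chain to an algebra. -/
noncomputable def p {C : Type u} [Category.{v} C] [HasBinaryCoproducts C] (F : C ⥤ C) (K : C)
    (A : Endofunctor.Algebra F) (g : K ⟶ A.a) : ∀ n : ℕ, X F K n ⟶ A.a
  | 0 => g
  | n + 1 => coprod.desc g (F.map (p F K A g n) ≫ A.str)

theorem i_p {C : Type u} [Category.{v} C] [HasBinaryCoproducts C] (F : C ⥤ C) (K : C)
    (A : Endofunctor.Algebra F) (g : K ⟶ A.a) :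
    ∀ n : ℕ, i F K n ≫ p F K A g (n + 1) = p F K A g n
  | 0 => coprod.inl_desc _ _
  | n + 1 => by
    change coprod.map (𝟙 K) (F.map (i F K n)) ≫
      coprod.desc g (F.map (p F K A g (n + 1)) ≫ A.str) =
      coprod.desc g (F.map (p F K A g n) ≫ A.str)
    rw [coprod.map_desc, ← F.map_comp_assoc, i_p F K A g n, Category.id_comp]

theorem p_step {C : Type u} [Category.{v} C] [HasBinaryCoproducts C] (F : C ⥤ C) (K : C)
    (A : Endofunctor.Algebra F) (g : K ⟶ A.a) {P : C} (f : P ⟶ A.a) (n : ℕ)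
    (q : X F K n ⟶ P) (hq : q ≫ f = p F K A g n) :
    coprod.map (𝟙 K) (F.map q) ≫ coprod.desc g (F.map f ≫ A.str) = p F K A g (n + 1) := by
  rw [coprod.map_desc, ← F.map_comp_assoc, hq, Category.id_comp]
  rfl

/-- The cocone on the free chain given by an algebra. -/
noncomputable def pCocone {C : Type u} [Category.{v} C] [HasBinaryCoproducts C]
    (F : C ⥤ C) (K : C) (A : Endofunctor.Algebra F) (g : K ⟶ A.a) : Cocone (D F K) where
  pt := A.a
  ι := NatTrans.ofSequence (F := D F K) (G := (Functor.const ℕ).obj A.a) (p F K A g) (by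
    intro n
    have h : (D F K).map (homOfLE (Nat.le_add_right n 1)) = i F K n :=
      Functor.ofSequence_map_homOfLE_succ (i F K) n
    rw [h]
    exact (i_p F K A g n).trans (Category.comp_id _).symm)

end Adamek2

/-- Ad\'amek's free algebra construction: if the free chain on `K` has a colimit `K*`
and the canonically induced morphism `u : K* ⟶ K ⨿ F K*` is an isomorphism, then
`(K*, coprod.inr ≫ inv u)` together with `ι 0 : K ⟶ K*` is a free `F`-algebra on `K`. -/
theorem adamek_free_algebra {C : Type u} [Category.{v} C] [HasBinaryCoproducts C]
    (F : C ⥤ C) (K : C)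
    (c : Cocone (Adamek2.D F K)) (hc : IsColimit c)
    (u : c.pt ⟶ K ⨿ F.obj c.pt)
    (hu0 : c.ι.app 0 ≫ u = coprod.inl)
    (hus : ∀ n : ℕ, c.ι.app (n + 1) ≫ u = coprod.map (𝟙 K) (F.map (c.ι.app n)))
    (hiso : IsIso u) :
    ∀ (A : Endofunctor.Algebra F) (g : K ⟶ A.a),
      ∃! h : (⟨c.pt, coprod.inr ≫ inv u⟩ : Endofunctor.Algebra F) ⟶ A,
        c.ι.app 0 ≫ h.f = g := by
  intro A g
  -- a map that solves the recursive equation is determined on the chain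
  have key : ∀ f : c.pt ⟶ A.a, f = u ≫ coprod.desc g (F.map f ≫ A.str) →
      ∀ n, c.ι.app n ≫ f = Adamek2.p F K A g n := by
    intro f hf n
    induction n with
    | zero =>
      rw [hf, ← Category.assoc, hu0]
      exact coprod.inl_desc _ _
    | succ n ih =>
      rw [hf, ← Category.assoc, hus n]
      exact Adamek2.p_step F K A g f n (c.ι.app n) ih
  have hinl : c.ι.app 0 = coprod.inl ≫ inv u := by
    exact (IsIso.eq_comp_inv u).2 hu0
  let f : c.pt ⟶ A.a := hc.desc (Adamek2.pCocone F K A g)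
  have hfac : ∀ n, c.ι.app n ≫ f = Adamek2.p F K A g n := fun n =>
    hc.fac (Adamek2.pCocone F K A g) n
  have hf : f = u ≫ coprod.desc g (F.map f ≫ A.str) := by
    refine hc.hom_ext fun n => ?_
    rw [hfac n, ← Category.assoc]
    cases n with
    | zero =>
      rw [hu0]
      exact (coprod.inl_desc _ _).symm
    | succ n =>
      rw [hus n]
      exact (Adamek2.p_step F K A g f n (c.ι.app n) (hfac n)).symm
  refine ⟨⟨f, ?_⟩, hfac 0, ?_⟩
  · change F.map f ≫ A.str = (coprod.inr ≫ inv u) ≫ f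
    conv_rhs => rw [hf]
    rw [Category.assoc, IsIso.inv_hom_id_assoc]
    exact (coprod.inr_desc _ _).symm
  · intro h hh
    have hh' : c.ι.app 0 ≫ h.f = g := hh
    have hstr : F.map h.f ≫ A.str = (coprod.inr ≫ inv u) ≫ h.f := h.h
    have heq : h.f = u ≫ coprod.desc g (F.map h.f ≫ A.str) := by
      rw [← IsIso.inv_comp_eq]
      apply coprod.hom_ext
      · rw [coprod.inl_desc, ← Category.assoc, ← hinl]
        exact hh'
      · rw [coprod.inr_desc, hstr, Category.assoc]
    apply Endofunctor.Algebra.ext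
    exact hc.hom_ext fun n => (key h.f heq n).trans (hfac n).symm
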